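/- arXiv:1603.07628 — 4 statements merged into one kernel-verified Lean document; each statement's English description precedes it below -/
import Mathlib

section
/- (Proposition 9, refined bound on the derivative of the MMSE.) For every n ≥ 1, every random vector X in ℝⁿ with E[‖X‖²] < ∞, and every snr > 0, (1/n)·Tr(E[(Cov(X|Y_snr))²]) ≤ (1/(n·snr²))·( Tr(E[(E[Z Zᵀ|Y_snr])²]) − Tr((Iₙ − snr·E[Cov(X|Y_snr)])²) ). -/
open MeasureTheory ProbabilityTheory Real Matrix

noncomputable section

/-- The observation `Y_snr = √snr · X + Z` as a random vector in `ℝⁿ` (modeled as `Fin n → ℝ`). -/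
def obs {Ω : Type*} {n : ℕ} (X Z : Ω → Fin n → ℝ) (snr : ℝ) : Ω → Fin n → ℝ :=
  fun ω i => Real.sqrt snr * X ω i + Z ω i

/-- The σ-algebra generated by the observation `Y_snr`. -/
def obsSigma {Ω : Type*} [MeasurableSpace Ω] {n : ℕ} (X Z : Ω → Fin n → ℝ) (snr : ℝ) :
    MeasurableSpace Ω :=
  MeasurableSpace.comap (obs X Z snr) inferInstance

/-- Componentwise conditional expectation of a random vector given a sub-σ-algebra `m`. -/
def ceVec {Ω : Type*} {n : ℕ} (m : MeasurableSpace Ω) [MeasurableSpace Ω] (μ : Measure Ω)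
    (V : Ω → Fin n → ℝ) : Ω → Fin n → ℝ :=
  fun ω i => (μ[fun ω' => V ω' i | m]) ω

/-- Entrywise conditional expectation of a random matrix given a sub-σ-algebra `m`. -/
def ceMat {Ω : Type*} {n : ℕ} (m : MeasurableSpace Ω) [MeasurableSpace Ω] (μ : Measure Ω)
    (M : Ω → Matrix (Fin n) (Fin n) ℝ) : Ω → Matrix (Fin n) (Fin n) ℝ :=
  fun ω => Matrix.of fun i j => (μ[fun ω' => M ω' i j | m]) ω

/-- Conditional covariance matrix `Cov(V|m) = E[V Vᵀ|m] − E[V|m]·E[V|m]ᵀ` (entrywise). -/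
def covMat {Ω : Type*} {n : ℕ} (m : MeasurableSpace Ω) [MeasurableSpace Ω] (μ : Measure Ω)
    (V : Ω → Fin n → ℝ) : Ω → Matrix (Fin n) (Fin n) ℝ :=
  fun ω => ceMat m μ (fun ω' => Matrix.vecMulVec (V ω') (V ω')) ω
    - Matrix.vecMulVec (ceVec m μ V ω) (ceVec m μ V ω)

/-- Entrywise expectation of a random matrix. -/
def expMat {Ω : Type*} [MeasurableSpace Ω] {n : ℕ} (μ : Measure Ω)
    (M : Ω → Matrix (Fin n) (Fin n) ℝ) : Matrix (Fin n) (Fin n) ℝ :=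
  Matrix.of fun i j => ∫ ω, M ω i j ∂μ

/-- `Tr(E[M])` for a random matrix `M` (expectation entrywise). -/
def trExp {Ω : Type*} [MeasurableSpace Ω] {n : ℕ} (μ : Measure Ω)
    (M : Ω → Matrix (Fin n) (Fin n) ℝ) : ℝ :=
  Matrix.trace (expMat μ M)

/-- The conditional covariance of two square-integrable random variables, in centred form and as
the difference of conditional moments. -/
theorem condExp_mul_centered {Ω : Type*} {m : MeasurableSpace Ω} [mΩ : MeasurableSpace Ω]
    {μ : Measure Ω} [IsProbabilityMeasure μ] (hm : m ≤ mΩ) {V W : Ω → ℝ}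
    (hV : MemLp V 2 μ) (hW : MemLp W 2 μ) :
    μ[(V - μ[V | m]) * (W - μ[W | m]) | m] =ᵐ[μ] μ[V * W | m] - μ[V | m] * μ[W | m] := by
  have hV' : MemLp (μ[V | m]) 2 μ := hV.condExp one_le_two
  have hW' : MemLp (μ[W | m]) 2 μ := hW.condExp one_le_two
  have hVW := hV.integrable_mul hW
  have hVW' := hV.integrable_mul hW'
  have hV'W := hV'.integrable_mul hW
  have hV'W' := hV'.integrable_mul hW'
  have hexpand : (V - μ[V | m]) * (W - μ[W | m])
      = V * W - V * μ[W | m] - μ[V | m] * W + μ[V | m] * μ[W | m] := by ring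
  rw [hexpand]
  filter_upwards [condExp_add ((hVW.sub hVW').sub hV'W) hV'W' m, condExp_sub (hVW.sub hVW') hV'W m,
    condExp_sub hVW hVW' m,
    condExp_mul_of_stronglyMeasurable_right stronglyMeasurable_condExp hVW'
      (hV.integrable one_le_two),
    condExp_mul_of_stronglyMeasurable_left stronglyMeasurable_condExp hV'W
      (hW.integrable one_le_two)] with ω h1 h2 h3 h4 h5
  have h6 : μ[μ[V | m] * μ[W | m] | m] = μ[V | m] * μ[W | m] :=
    condExp_of_stronglyMeasurable hm (stronglyMeasurable_condExp.mul stronglyMeasurable_condExp)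
      hV'W'
  rw [h6] at h1
  simp only [Pi.add_apply, Pi.sub_apply, Pi.mul_apply] at *
  linarith

/-- If `s • V + V'` and `s • W + W'` are measurable with respect to `m`, the conditional covariance
of `V'` and `W'` given `m` is `s ^ 2` times that of `V` and `W`. -/
theorem condCov_noise_eq_mul_condCov_signal {Ω : Type*} {m : MeasurableSpace Ω}
    [mΩ : MeasurableSpace Ω] {μ : Measure Ω} [IsProbabilityMeasure μ] (hm : m ≤ mΩ)
    {V V' W W' : Ω → ℝ} {s : ℝ}
    (hV : MemLp V 2 μ) (hV' : MemLp V' 2 μ) (hW : MemLp W 2 μ) (hW' : MemLp W' 2 μ)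
    (hVm : StronglyMeasurable[m] (s • V + V')) (hWm : StronglyMeasurable[m] (s • W + W')) :
    μ[V' * W' | m] - μ[V' | m] * μ[W' | m]
      =ᵐ[μ] s ^ 2 • (μ[V * W | m] - μ[V | m] * μ[W | m]) := by
  have hcenter : ∀ {U U' : Ω → ℝ}, MemLp U 2 μ → MemLp U' 2 μ →
      StronglyMeasurable[m] (s • U + U') →
      U' - μ[U' | m] =ᵐ[μ] (-s) • (U - μ[U | m]) := by
    intro U U' hU hU' hUm
    have hi := (hU.integrable one_le_two).smul s
    have hi' := hU'.integrable one_le_two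
    have h0 := condExp_of_stronglyMeasurable hm hUm (hi.add hi')
    filter_upwards [condExp_add hi hi' m, condExp_smul (μ := μ) s U m] with ω h1 h2
    rw [h0] at h1
    simp only [Pi.add_apply, Pi.sub_apply, Pi.smul_apply, smul_eq_mul] at *
    rw [h2] at h1
    linarith
  have hprod : (V' - μ[V' | m]) * (W' - μ[W' | m])
      =ᵐ[μ] s ^ 2 • ((V - μ[V | m]) * (W - μ[W | m])) := by
    filter_upwards [hcenter hV hV' hVm, hcenter hW hW' hWm] with ω h1 h2
    simp only [Pi.mul_apply, Pi.smul_apply, smul_eq_mul, h1, h2]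
    ring
  filter_upwards [condExp_mul_centered hm hV' hW', condExp_mul_centered hm hV hW,
    condExp_congr_ae (m := m) hprod,
    condExp_smul (μ := μ) (s ^ 2) ((V - μ[V | m]) * (W - μ[W | m])) m] with ω h1 h2 h3 h4
  rw [← h1, h3, h4, Pi.smul_apply, h2, Pi.smul_apply]

/-- The product of two functions in `L⁴` is in `L²`. -/
theorem memLp_two_mul_of_memLp_four {Ω : Type*} [MeasurableSpace Ω] {μ : Measure Ω} {f g : Ω → ℝ}
    (hf : MemLp f 4 μ) (hg : MemLp g 4 μ) : MemLp (f * g) 2 μ := by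
  have : ENNReal.HolderTriple 4 4 2 := ⟨by
    rw [← two_mul, ← ENNReal.toReal_eq_toReal_iff' (by finiteness) (by finiteness)]
    norm_num⟩
  exact hg.mul hf

/-- Jensen's inequality for the square. -/
theorem sq_integral_le_integral_sq {Ω : Type*} [MeasurableSpace Ω] {μ : Measure Ω}
    [IsProbabilityMeasure μ] {f : Ω → ℝ} (hf : MemLp f 2 μ) :
    (∫ ω, f ω ∂μ) ^ 2 ≤ ∫ ω, f ω ^ 2 ∂μ := by
  have h := variance_nonneg f μ
  rw [variance_eq_sub hf] at h
  simpa using h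

/-- The conditional covariance matrix of a random vector in `L⁴` is nonnegative, on average, along
the conditional mean. -/
theorem sum_integral_condExp_mul_condCov_nonneg {Ω ι : Type*} [Fintype ι] {m : MeasurableSpace Ω}
    [mΩ : MeasurableSpace Ω] {μ : Measure Ω} [IsProbabilityMeasure μ] (hm : m ≤ mΩ)
    {V : ι → Ω → ℝ} (hV : ∀ i, MemLp (V i) 4 μ) :
    0 ≤ ∑ i, ∑ j, ∫ ω, ((μ[V i | m] * μ[V j | m]) *
      (μ[V i * V j | m] - μ[V i | m] * μ[V j | m])) ω ∂μ := by
  have h4 : (1 : ENNReal) ≤ 4 := by norm_num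
  have hz : ∀ i, MemLp (μ[V i | m]) 4 μ := fun i => (hV i).condExp h4
  have hV2 : ∀ i, MemLp (V i) 2 μ := fun i => (hV i).mono_exponent (by norm_num)
  have hzz : ∀ i j, MemLp (μ[V i | m] * μ[V j | m]) 2 μ :=
    fun i j => memLp_two_mul_of_memLp_four (hz i) (hz j)
  have hcc : ∀ i j, MemLp ((V i - μ[V i | m]) * (V j - μ[V j | m])) 2 μ :=
    fun i j => memLp_two_mul_of_memLp_four ((hV i).sub (hz i)) ((hV j).sub (hz j))
  have hint : ∀ i j, Integrable
      ((μ[V i | m] * μ[V j | m]) * ((V i - μ[V i | m]) * (V j - μ[V j | m]))) μ :=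
    fun i j => (hzz i j).integrable_mul (hcc i j)
  have hterm : ∀ i j, ∫ ω, ((μ[V i | m] * μ[V j | m]) *
      (μ[V i * V j | m] - μ[V i | m] * μ[V j | m])) ω ∂μ
      = ∫ ω, ((μ[V i | m] * μ[V j | m]) * ((V i - μ[V i | m]) * (V j - μ[V j | m]))) ω ∂μ := by
    intro i j
    rw [← integral_condExp hm (f := (μ[V i | m] * μ[V j | m]) *
      ((V i - μ[V i | m]) * (V j - μ[V j | m])))]
    refine integral_congr_ae ?_
    filter_upwards [condExp_mul_of_stronglyMeasurable_left
      (stronglyMeasurable_condExp.mul stronglyMeasurable_condExp) (hint i j)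
      ((hcc i j).integrable one_le_two), condExp_mul_centered hm (hV2 i) (hV2 j)] with ω h1 h2
    rw [h1, Pi.mul_apply _ (_ - _), ← h2]
    rfl
  simp_rw [hterm]
  calc (0 : ℝ) ≤ ∫ ω, (∑ i, (μ[V i | m]) ω * (V i ω - (μ[V i | m]) ω)) ^ 2 ∂μ :=
        integral_nonneg fun ω => sq_nonneg _
    _ = ∫ ω, ∑ i, ∑ j, ((μ[V i | m] * μ[V j | m]) *
          ((V i - μ[V i | m]) * (V j - μ[V j | m]))) ω ∂μ := by
        congr 1 with ω
        rw [sq, Finset.sum_mul_sum]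
        refine Finset.sum_congr rfl fun i _ => Finset.sum_congr rfl fun j _ => ?_
        simp only [Pi.mul_apply, Pi.sub_apply]
        ring
    _ = _ := by
        rw [integral_finsetSum _ fun i _ => integrable_finsetSum _ fun j _ => hint i j]
        exact Finset.sum_congr rfl fun i _ => integral_finsetSum _ fun j _ => hint i j

/-- The Frobenius norm of the conditional second moment matrix dominates that of the conditional
covariance matrix together with that of the second moment matrix of the conditional mean. -/
theorem sum_integral_sq_condCov_add_le {Ω ι : Type*} [Fintype ι] {m : MeasurableSpace Ω}
    [mΩ : MeasurableSpace Ω] {μ : Measure Ω} [IsProbabilityMeasure μ] (hm : m ≤ mΩ)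
    {V : ι → Ω → ℝ} (hV : ∀ i, MemLp (V i) 4 μ) :
    ∑ i, ∑ j, ∫ ω, (μ[V i * V j | m] - μ[V i | m] * μ[V j | m]) ω ^ 2 ∂μ
      + ∑ i, ∑ j, (∫ ω, (μ[V i | m] * μ[V j | m]) ω ∂μ) ^ 2
      ≤ ∑ i, ∑ j, ∫ ω, (μ[V i * V j | m]) ω ^ 2 ∂μ := by
  have h4 : (1 : ENNReal) ≤ 4 := by norm_num
  have hzz : ∀ i j, MemLp (μ[V i | m] * μ[V j | m]) 2 μ :=
    fun i j => memLp_two_mul_of_memLp_four ((hV i).condExp h4) ((hV j).condExp h4)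
  have hM : ∀ i j, MemLp (μ[V i * V j | m]) 2 μ :=
    fun i j => (memLp_two_mul_of_memLp_four (hV i) (hV j)).condExp one_le_two
  have hC : ∀ i j, MemLp (μ[V i * V j | m] - μ[V i | m] * μ[V j | m]) 2 μ :=
    fun i j => (hM i j).sub (hzz i j)
  have hsplit : ∀ i j, ∫ ω, (μ[V i * V j | m]) ω ^ 2 ∂μ
      = ∫ ω, (μ[V i * V j | m] - μ[V i | m] * μ[V j | m]) ω ^ 2 ∂μ
        + 2 * ∫ ω, ((μ[V i | m] * μ[V j | m]) *
          (μ[V i * V j | m] - μ[V i | m] * μ[V j | m])) ω ∂μ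
        + ∫ ω, (μ[V i | m] * μ[V j | m]) ω ^ 2 ∂μ := by
    intro i j
    have hcross := ((hzz i j).integrable_mul (hC i j)).const_mul 2
    rw [← integral_const_mul, ← integral_add' (hC i j).integrable_sq hcross,
      ← integral_add' ((hC i j).integrable_sq.add hcross) (hzz i j).integrable_sq]
    congr 1 with ω
    simp only [Pi.add_apply, Pi.mul_apply, Pi.sub_apply]
    ring
  have hjensen : ∑ i, ∑ j, (∫ ω, (μ[V i | m] * μ[V j | m]) ω ∂μ) ^ 2
      ≤ ∑ i, ∑ j, ∫ ω, (μ[V i | m] * μ[V j | m]) ω ^ 2 ∂μ :=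
    Finset.sum_le_sum fun i _ => Finset.sum_le_sum fun j _ => sq_integral_le_integral_sq (hzz i j)
  have hnonneg := sum_integral_condExp_mul_condCov_nonneg hm hV
  simp_rw [hsplit, Finset.sum_add_distrib, ← Finset.mul_sum]
  linarith

/-- The trace of the expected square of a symmetric random matrix with square-integrable entries is
the sum of the second moments of the entries. -/
theorem trExp_sq_eq_sum_integral {Ω : Type*} [MeasurableSpace Ω] {n : ℕ} {μ : Measure Ω}
    {M : Ω → Matrix (Fin n) (Fin n) ℝ} (hsymm : ∀ ω i j, M ω i j = M ω j i)
    (hM : ∀ i j, MemLp (fun ω => M ω i j) 2 μ) :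
    trExp μ (fun ω => M ω ^ 2) = ∑ i, ∑ j, ∫ ω, M ω i j ^ 2 ∂μ := by
  simp only [trExp, expMat, Matrix.trace, Matrix.diag_apply, Matrix.of_apply, sq (M _),
    Matrix.mul_apply]
  refine Finset.sum_congr rfl fun i _ => ?_
  rw [← integral_finsetSum _ fun j _ => (hM i j).integrable_sq]
  refine integral_congr_ae (.of_forall fun ω => Finset.sum_congr rfl fun j _ => ?_)
  rw [hsymm ω j i, sq]

section StandardGaussian

variable {Ω : Type*} [MeasurableSpace Ω] {μ : Measure Ω} {n : ℕ} {Z : Ω → Fin n → ℝ}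

/-- The coordinates of a standard Gaussian vector are in `L⁴`. -/
theorem memLp_four_of_map_eq_pi_gaussianReal (hZ : Measurable Z)
    (hZlaw : Measure.map Z μ = Measure.pi fun _ : Fin n => gaussianReal 0 1) (i : Fin n) :
    MemLp (fun ω => Z ω i) 4 μ := by
  have hmp : MeasurePreserving Z μ (Measure.pi fun _ : Fin n => gaussianReal 0 1) := ⟨hZ, hZlaw⟩
  exact (memLp_id_gaussianReal' 4 (by simp)).comp_measurePreserving
    ((measurePreserving_eval (fun _ : Fin n => gaussianReal 0 1) i).comp hmp)

/-- A standard Gaussian vector has identity second moment matrix. -/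
theorem integral_mul_of_map_eq_pi_gaussianReal (hZ : Measurable Z)
    (hZlaw : Measure.map Z μ = Measure.pi fun _ : Fin n => gaussianReal 0 1) (i j : Fin n) :
    ∫ ω, Z ω i * Z ω j ∂μ = (1 : Matrix (Fin n) (Fin n) ℝ) i j := by
  set γ : Measure (Fin n → ℝ) := Measure.pi fun _ : Fin n => gaussianReal 0 1 with hγ
  have hpush : ∫ ω, Z ω i * Z ω j ∂μ = ∫ x : Fin n → ℝ, x i * x j ∂γ := by
    rw [← hZlaw, integral_map hZ.aemeasurable (by fun_prop)]
  have heval : ∀ (k : Fin n) (f : ℝ → ℝ), Measurable f →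
      ∫ x : Fin n → ℝ, f (x k) ∂γ = ∫ t, f t ∂gaussianReal 0 1 := by
    intro k f hf
    rw [← (measurePreserving_eval (fun _ : Fin n => gaussianReal 0 1) k).map_eq,
      integral_map (measurable_pi_apply k).aemeasurable hf.aestronglyMeasurable]
  rw [hpush]
  rcases eq_or_ne i j with rfl | hij
  · have hvar := variance_fun_id_gaussianReal (μ := 0) (v := 1)
    rw [variance_eq_integral (by fun_prop), integral_id_gaussianReal] at hvar
    rw [heval i (fun t => t * t) (by fun_prop), Matrix.one_apply_eq]
    simpa [sq] using hvar
  · have hind := (iIndepFun_pi (μ := fun _ : Fin n => gaussianReal 0 1)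
      (X := fun _ => id) fun _ => aemeasurable_id).indepFun hij
    have hmul : ∫ x : Fin n → ℝ, x i * x j ∂γ
        = (∫ x : Fin n → ℝ, x i ∂γ) * ∫ x : Fin n → ℝ, x j ∂γ :=
      hind.integral_fun_mul_eq_mul_integral (measurable_pi_apply i).aestronglyMeasurable
        (measurable_pi_apply j).aestronglyMeasurable
    rw [hmul, heval i (fun t => t) measurable_id, integral_id_gaussianReal, zero_mul,
      Matrix.one_apply_ne hij]

end StandardGaussian

/-- The bound on the squared conditional covariance of the signal `X` given any `σ`-algebra `m` that
makes `√snr • X + Z` measurable. -/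
theorem sq_mul_trExp_sq_covMat_le {Ω : Type*} {m : MeasurableSpace Ω} [mΩ : MeasurableSpace Ω]
    {μ : Measure Ω} [IsProbabilityMeasure μ] (hm : m ≤ mΩ) {n : ℕ} {X Z : Ω → Fin n → ℝ}
    (hX : Measurable X) (hZ : Measurable Z)
    (hZlaw : Measure.map Z μ = Measure.pi fun _ : Fin n => gaussianReal 0 1)
    (hX2 : Integrable (fun ω => ∑ i, (X ω i) ^ 2) μ) {snr : ℝ} (hsnr : 0 < snr)
    (hYm : ∀ i, StronglyMeasurable[m] (√snr • (fun ω => X ω i) + fun ω => Z ω i)) :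
    snr ^ 2 * trExp μ (fun ω => covMat m μ X ω ^ 2)
      ≤ trExp μ (fun ω => ceMat m μ (fun ω' => Matrix.vecMulVec (Z ω') (Z ω')) ω ^ 2)
        - Matrix.trace (((1 : Matrix (Fin n) (Fin n) ℝ)
          - snr • expMat μ (covMat m μ X)) ^ 2) := by
  have hZ4 := memLp_four_of_map_eq_pi_gaussianReal hZ hZlaw
  have hZ2 : ∀ i, MemLp (fun ω => Z ω i) 2 μ := fun i => (hZ4 i).mono_exponent (by norm_num)
  have hXL2 : ∀ i, MemLp (fun ω => X ω i) 2 μ := by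
    intro i
    have hXi : Measurable fun ω => X ω i := by fun_prop
    refine (memLp_two_iff_integrable_sq hXi.aestronglyMeasurable).2
      (hX2.mono' (hXi.pow_const 2).aestronglyMeasurable (.of_forall fun ω => ?_))
    rw [Real.norm_of_nonneg (sq_nonneg _)]
    exact Finset.single_le_sum (f := fun k => X ω k ^ 2) (fun k _ => sq_nonneg _)
      (Finset.mem_univ i)
  set V : Fin n → Ω → ℝ := fun i ω => Z ω i
  have hcov : ∀ i j, (fun ω => snr * covMat m μ X ω i j)
      =ᵐ[μ] μ[V i * V j | m] - μ[V i | m] * μ[V j | m] := by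
    intro i j
    filter_upwards [condCov_noise_eq_mul_condCov_signal hm (hXL2 i) (hZ2 i) (hXL2 j) (hZ2 j)
      (hYm i) (hYm j)] with ω h
    rw [h, Real.sq_sqrt hsnr.le]
    rfl
  have hzz : ∀ i j, MemLp (μ[V i | m] * μ[V j | m]) 2 μ := fun i j =>
    memLp_two_mul_of_memLp_four ((hZ4 i).condExp (by norm_num)) ((hZ4 j).condExp (by norm_num))
  have hM : ∀ i j, MemLp (μ[V i * V j | m]) 2 μ := fun i j =>
    (memLp_two_mul_of_memLp_four (hZ4 i) (hZ4 j)).condExp one_le_two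
  have hC : ∀ i j, MemLp (fun ω => covMat m μ X ω i j) 2 μ := by
    intro i j
    have h := (((hM i j).sub (hzz i j)).ae_eq (hcov i j).symm).const_mul snr⁻¹
    simpa [← mul_assoc, inv_mul_cancel₀ hsnr.ne'] using h
  have hCsymm : ∀ ω i j, covMat m μ X ω i j = covMat m μ X ω j i := by
    intro ω i j
    simp [covMat, ceMat, Matrix.vecMulVec_apply, mul_comm]
  have hcovSq : snr ^ 2 * trExp μ (fun ω => covMat m μ X ω ^ 2)
      = ∑ i, ∑ j, ∫ ω, (μ[V i * V j | m] - μ[V i | m] * μ[V j | m]) ω ^ 2 ∂μ := by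
    simp_rw [trExp_sq_eq_sum_integral hCsymm hC, Finset.mul_sum, ← integral_const_mul]
    refine Finset.sum_congr rfl fun i _ => Finset.sum_congr rfl fun j _ => integral_congr_ae ?_
    filter_upwards [hcov i j] with ω h
    rw [← h]
    ring
  have hnoiseSq : trExp μ (fun ω => ceMat m μ (fun ω' => Matrix.vecMulVec (Z ω') (Z ω')) ω ^ 2)
      = ∑ i, ∑ j, ∫ ω, (μ[V i * V j | m]) ω ^ 2 ∂μ :=
    trExp_sq_eq_sum_integral
      (fun ω i j => by simp [ceMat, Matrix.vecMulVec_apply, mul_comm]) hM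
  have hfisher : ∀ i j, ((1 : Matrix (Fin n) (Fin n) ℝ) - snr • expMat μ (covMat m μ X)) i j
      = ∫ ω, (μ[V i | m] * μ[V j | m]) ω ∂μ := by
    intro i j
    have h1 : snr * ∫ ω, covMat m μ X ω i j ∂μ
        = ∫ ω, (μ[V i * V j | m]) ω ∂μ - ∫ ω, (μ[V i | m] * μ[V j | m]) ω ∂μ := by
      rw [← integral_const_mul, integral_congr_ae (hcov i j)]
      exact integral_sub ((hM i j).integrable one_le_two) ((hzz i j).integrable one_le_two)
    have h2 : ∫ ω, (μ[V i * V j | m]) ω ∂μ = (1 : Matrix (Fin n) (Fin n) ℝ) i j :=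
      (integral_condExp hm).trans (integral_mul_of_map_eq_pi_gaussianReal hZ hZlaw i j)
    simp only [Matrix.sub_apply, Matrix.smul_apply, smul_eq_mul, expMat, Matrix.of_apply]
    linarith
  have hfisherSq : Matrix.trace (((1 : Matrix (Fin n) (Fin n) ℝ)
        - snr • expMat μ (covMat m μ X)) ^ 2)
      = ∑ i, ∑ j, (∫ ω, (μ[V i | m] * μ[V j | m]) ω ∂μ) ^ 2 := by
    simp only [sq (_ - _ : Matrix (Fin n) (Fin n) ℝ), Matrix.trace, Matrix.diag_apply,
      Matrix.mul_apply, hfisher]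
    refine Finset.sum_congr rfl fun i _ => Finset.sum_congr rfl fun j _ => ?_
    rw [mul_comm (μ[V j | m]), sq]
  have hmain := sum_integral_sq_condCov_add_le hm hZ4
  rw [← hcovSq, ← hfisherSq, ← hnoiseSq] at hmain
  linarith

/-- **Proposition 9 (refined bound on the derivative of the MMSE).**
`(1/n)·Tr(E[(Cov(X|Y))²]) ≤ (1/(n·snr²))·(Tr(E[(E[ZZᵀ|Y])²]) − Tr((I − snr·E[Cov(X|Y)])²))`. -/
theorem derivative_mmse_refined_bound {Ω : Type*} [MeasurableSpace Ω] (μ : Measure Ω) [IsProbabilityMeasure μ]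
    (n : ℕ) (hn : 1 ≤ n) (X Z : Ω → Fin n → ℝ)
    (hX : Measurable X) (hZ : Measurable Z)
    (hZlaw : Measure.map Z μ = Measure.pi fun _ : Fin n => gaussianReal 0 1)
    (hindep : IndepFun X Z μ)
    (hX2 : Integrable (fun ω => ∑ i, (X ω i) ^ 2) μ)
    (snr : ℝ) (hsnr : 0 < snr) :
    (1 / (n : ℝ)) * trExp μ (fun ω => (covMat (obsSigma X Z snr) μ X ω) ^ 2) ≤
      (1 / ((n : ℝ) * snr ^ 2)) *
        (trExp μ (fun ω =>
            (ceMat (obsSigma X Z snr) μ (fun ω' => Matrix.vecMulVec (Z ω') (Z ω')) ω) ^ 2)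
          - Matrix.trace (((1 : Matrix (Fin n) (Fin n) ℝ)
              - snr • expMat μ (covMat (obsSigma X Z snr) μ X)) ^ 2)) := by
  have hm : obsSigma X Z snr ≤ ‹MeasurableSpace Ω› := by
    have hobs : Measurable (obs X Z snr) := by unfold obs; fun_prop
    exact hobs.comap_le
  have hYm : ∀ i, StronglyMeasurable[obsSigma X Z snr]
      (√snr • (fun ω => X ω i) + fun ω => Z ω i) := fun i =>
    ((measurable_pi_apply i).comp (comap_measurable (obs X Z snr))).stronglyMeasurable
  have hmain := sq_mul_trExp_sq_covMat_le hm hX hZ hZlaw hX2 hsnr hYm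
  have hn' : (0 : ℝ) < n := by exact_mod_cast hn
  rw [one_div_mul_eq_div, one_div_mul_eq_div, div_le_div_iff₀ hn' (by positivity)]
  nlinarith

end
end

section
/- (Proposition 9, simplified form k_n ≤ n+2.) For every n ≥ 1, every random vector X in ℝⁿ with E[‖X‖²] < ∞, and every snr > 0, (1/n)·Tr(E[(Cov(X|Y_snr))²]) ≤ (n+2)/snr². In particular, for n = 1 this gives E[(Var(X|Y_snr))²] ≤ 3/snr², sharpening the previously known constant 48 to 3. -/
open MeasureTheory ProbabilityTheory Real Matrix

noncomputable section

theorem covMat_apply {Ω : Type*} {n : ℕ} (m : MeasurableSpace Ω) [MeasurableSpace Ω]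
    (μ : Measure Ω) (V : Ω → Fin n → ℝ) (ω : Ω) (i j : Fin n) :
    covMat m μ V ω i j = (μ[fun ω' => V ω' i * V ω' j | m]) ω
      - (μ[fun ω' => V ω' i | m]) ω * (μ[fun ω' => V ω' j | m]) ω := rfl

theorem covMat_symm {Ω : Type*} {n : ℕ} (m : MeasurableSpace Ω) [MeasurableSpace Ω]
    (μ : Measure Ω) (V : Ω → Fin n → ℝ) (ω : Ω) (i j : Fin n) :
    covMat m μ V ω i j = covMat m μ V ω j i := by
  simp only [covMat_apply, mul_comm]

/-- Conditional Jensen inequality for the square. -/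
theorem sq_condExp_ae_le {Ω : Type*} {m : MeasurableSpace Ω} [m₀ : MeasurableSpace Ω]
    (hm : m ≤ m₀) (μ : Measure Ω) [IsProbabilityMeasure μ] {f : Ω → ℝ} (hf : MemLp f 2 μ) :
    ∀ᵐ ω ∂μ, (μ[f | m]) ω ^ 2 ≤ (μ[fun ω' => f ω' ^ 2 | m]) ω := by
  have hnonneg : 0 ≤ᵐ[μ] Var[f; μ | m] :=
    condExp_nonneg (Filter.Eventually.of_forall fun ω => sq_nonneg _)
  filter_upwards [condVar_ae_eq_condExp_sq_sub_sq_condExp hm hf, hnonneg] with ω h1 h2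
  rw [h1] at h2
  simpa [sub_nonneg, Pi.pow_def] using h2

/-- The conditional covariance matrix is almost surely positive semidefinite. -/
theorem covMat_quadratic_nonneg {Ω : Type*} {n : ℕ} {m : MeasurableSpace Ω}
    [m₀ : MeasurableSpace Ω] (hm : m ≤ m₀) (μ : Measure Ω) [IsProbabilityMeasure μ]
    {V : Ω → Fin n → ℝ} (hV : ∀ i, MemLp (fun ω => V ω i) 2 μ) :
    ∀ᵐ ω ∂μ, ∀ v : Fin n → ℝ, 0 ≤ ∑ i, ∑ j, v i * v j * covMat m μ V ω i j := by
  have hint (i j : Fin n) : Integrable (fun ω => V ω i * V ω j) μ := (hV i).integrable_mul (hV j)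
  have hfixed (v : Fin n → ℝ) :
      ∀ᵐ ω ∂μ, 0 ≤ ∑ i, ∑ j, v i * v j * covMat m μ V ω i j := by
    have hlin : μ[fun ω => ∑ i, v i * V ω i | m] =ᵐ[μ]
        fun ω => ∑ i, v i * (μ[fun ω' => V ω' i | m]) ω := by
      have h := condExp_finsetSum (μ := μ) (s := Finset.univ) (f := fun i ω => v i * V ω i)
        (fun i _ => ((hV i).integrable one_le_two).const_mul _) m
      have h' : ∀ᵐ ω ∂μ, ∀ i, (μ[fun ω' => v i * V ω' i | m]) ω
          = v i * (μ[fun ω' => V ω' i | m]) ω :=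
        ae_all_iff.2 fun i => condExp_smul (v i) (fun ω' => V ω' i) m
      rw [show (∑ i, fun ω => v i * V ω i) = fun ω => ∑ i, v i * V ω i by
        ext; simp] at h
      filter_upwards [h, h'] with ω h h'
      simp [h, h']
    have hquad : μ[fun ω => (∑ i, v i * V ω i) ^ 2 | m] =ᵐ[μ]
        fun ω => ∑ i, ∑ j, v i * v j * (μ[fun ω' => V ω' i * V ω' j | m]) ω := by
      have h := condExp_finsetSum (μ := μ) (s := Finset.univ)
        (f := fun (p : Fin n × Fin n) ω => v p.1 * v p.2 * (V ω p.1 * V ω p.2))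
        (fun p _ => (hint p.1 p.2).const_mul _) m
      have h' : ∀ᵐ ω ∂μ, ∀ p : Fin n × Fin n,
          (μ[fun ω' => v p.1 * v p.2 * (V ω' p.1 * V ω' p.2) | m]) ω
          = v p.1 * v p.2 * (μ[fun ω' => V ω' p.1 * V ω' p.2 | m]) ω :=
        ae_all_iff.2 fun p => condExp_smul (v p.1 * v p.2) (fun ω' => V ω' p.1 * V ω' p.2) m
      rw [show (∑ p : Fin n × Fin n, fun ω => v p.1 * v p.2 * (V ω p.1 * V ω p.2))
          = fun ω => (∑ i, v i * V ω i) ^ 2 by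
        ext ω
        simp only [Finset.sum_apply, sq, Finset.sum_mul_sum, Fintype.sum_prod_type]
        exact Finset.sum_congr rfl fun i _ => Finset.sum_congr rfl fun j _ => by ring] at h
      filter_upwards [h, h'] with ω h h'
      simp [h, h', Fintype.sum_prod_type]
    have hmem : MemLp (fun ω => ∑ i, v i * V ω i) 2 μ :=
      memLp_finsetSum _ fun i _ => (hV i).const_mul (v i)
    filter_upwards [hlin, hquad, sq_condExp_ae_le hm μ hmem] with ω h1 h2 h3
    rw [h1, h2, ← sub_nonneg, sq, Finset.sum_mul_sum] at h3
    refine h3.trans_eq ?_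
    simp only [covMat_apply, ← Finset.sum_sub_distrib]
    exact Finset.sum_congr rfl fun i _ => Finset.sum_congr rfl fun j _ => by ring
  have hdense : DenseRange (fun (q : Fin n → ℚ) (i : Fin n) => (q i : ℝ)) :=
    DenseRange.piMap fun _ => Rat.denseRange_cast
  filter_upwards [ae_all_iff.2 fun q : Fin n → ℚ => hfixed fun i => (q i : ℝ)] with ω hω v
  exact hdense.induction_on (p := fun v : Fin n → ℝ =>
      0 ≤ ∑ i, ∑ j, v i * v j * covMat m μ V ω i j) v
    (isClosed_le continuous_const (by fun_prop)) hω

/-- Adding an `m`-measurable vector does not change the conditional covariance given `m`. -/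
theorem covMat_add_const_mul {Ω : Type*} {n : ℕ} {m : MeasurableSpace Ω}
    [m₀ : MeasurableSpace Ω] (μ : Measure Ω) [IsProbabilityMeasure μ]
    {U V : Ω → Fin n → ℝ} (hm : m ≤ m₀) (hUm : ∀ i, StronglyMeasurable[m] fun ω => U ω i)
    (hU : ∀ i, MemLp (fun ω => U ω i) 2 μ) (hV : ∀ i, MemLp (fun ω => V ω i) 2 μ) (c : ℝ) :
    ∀ᵐ ω ∂μ, ∀ i j, covMat m μ (fun ω' k => U ω' k + c * V ω' k) ω i j
      = c ^ 2 * covMat m μ V ω i j := by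
  have hU1 (i : Fin n) : Integrable (fun ω => U ω i) μ := (hU i).integrable one_le_two
  have hV1 (i : Fin n) : Integrable (fun ω => V ω i) μ := (hV i).integrable one_le_two
  have hUU (i j : Fin n) : Integrable (fun ω => U ω i * U ω j) μ := (hU i).integrable_mul (hU j)
  have hUV (i j : Fin n) : Integrable (fun ω => U ω i * V ω j) μ := (hU i).integrable_mul (hV j)
  have hVV (i j : Fin n) : Integrable (fun ω => V ω i * V ω j) μ := (hV i).integrable_mul (hV j)
  have hlin (i : Fin n) : ∀ᵐ ω ∂μ, (μ[fun ω' => U ω' i + c * V ω' i | m]) ω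
      = U ω i + c * (μ[fun ω' => V ω' i | m]) ω := by
    filter_upwards [condExp_add (hU1 i) ((hV1 i).const_mul c) m,
      condExp_smul (μ := μ) c (fun ω' => V ω' i) m] with ω h1 h2
    refine h1.trans ?_
    rw [Pi.add_apply, condExp_of_stronglyMeasurable hm (hUm i) (hU1 i)]
    exact congrArg (U ω i + ·) h2
  have hpull (i j : Fin n) : ∀ᵐ ω ∂μ, (μ[fun ω' => U ω' i * V ω' j | m]) ω
      = U ω i * (μ[fun ω' => V ω' j | m]) ω :=
    condExp_mul_of_stronglyMeasurable_left (hUm i) (hUV i j) (hV1 j)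
  have hquad (i j : Fin n) :
      ∀ᵐ ω ∂μ, (μ[fun ω' => (U ω' i + c * V ω' i) * (U ω' j + c * V ω' j) | m]) ω
      = U ω i * U ω j + c * (U ω i * (μ[fun ω' => V ω' j | m]) ω)
        + c * (U ω j * (μ[fun ω' => V ω' i | m]) ω)
        + c ^ 2 * (μ[fun ω' => V ω' i * V ω' j | m]) ω := by
    have hsplit : (fun ω' => (U ω' i + c * V ω' i) * (U ω' j + c * V ω' j))
        = (((fun ω' => U ω' i * U ω' j) + c • (fun ω' => U ω' i * V ω' j))
          + c • (fun ω' => U ω' j * V ω' i)) + c ^ 2 • (fun ω' => V ω' i * V ω' j) := by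
      ext ω
      simp only [Pi.add_apply, Pi.smul_apply, smul_eq_mul]
      ring
    have i2 := (hUV i j).smul c
    have i3 := (hUV j i).smul c
    have i4 := (hVV i j).smul (c ^ 2)
    rw [hsplit]
    filter_upwards [condExp_add (((hUU i j).add i2).add i3) i4 m,
      condExp_add ((hUU i j).add i2) i3 m, condExp_add (hUU i j) i2 m,
      condExp_smul (μ := μ) c (fun ω' => U ω' i * V ω' j) m,
      condExp_smul (μ := μ) c (fun ω' => U ω' j * V ω' i) m,
      condExp_smul (μ := μ) (c ^ 2) (fun ω' => V ω' i * V ω' j) m,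
      hpull i j, hpull j i] with ω h1 h2 h3 h4 h5 h6 h7 h8
    rw [h1, Pi.add_apply, h2, Pi.add_apply, h3, Pi.add_apply, h4, h5, h6,
      condExp_of_stronglyMeasurable hm
        (show StronglyMeasurable[m] fun ω => U ω i * U ω j from (hUm i).mul (hUm j)) (hUU i j)]
    simp only [Pi.smul_apply, smul_eq_mul, h7, h8]
  filter_upwards [ae_all_iff.2 hlin, ae_all_iff.2 fun i => ae_all_iff.2 (hquad i)]
    with ω h1 h2 i j
  rw [covMat_apply, covMat_apply, h1, h1, h2]
  ring

/-- The squared Frobenius norm of the conditional covariance is dominated by the conditional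
fourth moments. -/
theorem sum_sq_covMat_ae_le {Ω : Type*} {n : ℕ} {m : MeasurableSpace Ω}
    [m₀ : MeasurableSpace Ω] (hm : m ≤ m₀) (μ : Measure Ω) [IsProbabilityMeasure μ]
    {V : Ω → Fin n → ℝ} (hV : ∀ i, MemLp (fun ω => V ω i) 2 μ)
    (hVV : ∀ i j, MemLp (fun ω => V ω i * V ω j) 2 μ) :
    ∀ᵐ ω ∂μ, ∑ i, ∑ j, covMat m μ V ω i j ^ 2
      ≤ ∑ i, ∑ j, (μ[fun ω' => (V ω' i * V ω' j) ^ 2 | m]) ω := by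
  filter_upwards [covMat_quadratic_nonneg hm μ hV,
    ae_all_iff.2 fun i => ae_all_iff.2 fun j => sq_condExp_ae_le hm μ (hVV i j)] with ω h1 h2
  set e : Fin n → ℝ := fun i => (μ[fun ω' => V ω' i | m]) ω with he
  refine le_trans ?_ (Finset.sum_le_sum fun i _ => Finset.sum_le_sum fun j _ => h2 i j)
  have hdecomp : ∑ i, ∑ j, (μ[fun ω' => V ω' i * V ω' j | m]) ω ^ 2
      = ∑ i, ∑ j, covMat m μ V ω i j ^ 2 + 2 * ∑ i, ∑ j, e i * e j * covMat m μ V ω i j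
        + ∑ i, ∑ j, (e i * e j) ^ 2 := by
    simp only [Finset.mul_sum, ← Finset.sum_add_distrib]
    refine Finset.sum_congr rfl fun i _ => Finset.sum_congr rfl fun j _ => ?_
    rw [covMat_apply]
    ring
  rw [hdecomp]
  have hrest : 0 ≤ ∑ i, ∑ j, (e i * e j) ^ 2 :=
    Finset.sum_nonneg fun i _ => Finset.sum_nonneg fun j _ => sq_nonneg _
  linarith [h1 e]

theorem integral_sq_gaussianReal : ∫ x, x ^ 2 ∂gaussianReal 0 1 = 1 := by
  have h := variance_eq_sub (memLp_id_gaussianReal (μ := 0) (v := 1) 2)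
  simp [variance_id_gaussianReal] at h
  exact h.symm

theorem integral_pow_four_gaussianReal : ∫ x, x ^ 4 ∂gaussianReal 0 1 = 3 := by
  have h := iteratedDeriv_mgf_zero (X := id) (μ := gaussianReal 0 1)
    (by simp [integrableExpSet_id_gaussianReal]) 4
  rw [mgf_id_gaussianReal] at h
  have hexp (t : ℝ) : HasDerivAt (fun t : ℝ => exp (t ^ 2 / 2)) (exp (t ^ 2 / 2) * t) t := by
    have := ((hasDerivAt_pow 2 t).div_const 2).exp
    convert this using 1
    push_cast
    ring
  have d1 : deriv (fun t : ℝ => exp (t ^ 2 / 2)) = fun t => t * exp (t ^ 2 / 2) :=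
    funext fun t => by rw [(hexp t).deriv, mul_comm]
  have d2 : deriv (fun t : ℝ => t * exp (t ^ 2 / 2)) = fun t => (1 + t ^ 2) * exp (t ^ 2 / 2) :=
    funext fun t => by
      refine ((hasDerivAt_id' t).mul (hexp t)).deriv.trans ?_
      ring
  have d3 : deriv (fun t : ℝ => (1 + t ^ 2) * exp (t ^ 2 / 2))
      = fun t => (3 * t + t ^ 3) * exp (t ^ 2 / 2) :=
    funext fun t => by
      refine (((hasDerivAt_pow 2 t).const_add 1).mul (hexp t)).deriv.trans ?_
      push_cast
      ring
  have d4 : deriv (fun t : ℝ => (3 * t + t ^ 3) * exp (t ^ 2 / 2)) 0 = 3 := by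
    refine ((((hasDerivAt_id' (0 : ℝ)).const_mul 3).add (hasDerivAt_pow 3 0)).mul
      (hexp 0)).deriv.trans ?_
    norm_num
  rw [show (fun t : ℝ => exp (0 * t + ((1 : NNReal) : ℝ) * t ^ 2 / 2))
    = fun t : ℝ => exp (t ^ 2 / 2) by simp] at h
  rw [iteratedDeriv_succ, iteratedDeriv_succ, iteratedDeriv_succ, iteratedDeriv_one,
    d1, d2, d3, d4] at h
  simpa using h.symm

theorem sum_integral_sq_mul_sq_gaussian (n : ℕ) :
    ∑ i : Fin n, ∑ j : Fin n,
      ∫ z : Fin n → ℝ, (z i * z j) ^ 2 ∂(Measure.pi fun _ => gaussianReal 0 1)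
      = n * (n + 2) := by
  have hcoord (i : Fin n) (k : ℕ) :
      ∫ z : Fin n → ℝ, z i ^ k ∂(Measure.pi fun _ => gaussianReal 0 1)
        = ∫ x, x ^ k ∂gaussianReal 0 1 :=
    integral_comp_eval (μ := fun _ : Fin n => gaussianReal 0 1) (f := fun x : ℝ => x ^ k)
      (by fun_prop)
  have hentry (i j : Fin n) :
      ∫ z : Fin n → ℝ, (z i * z j) ^ 2 ∂(Measure.pi fun _ => gaussianReal 0 1)
        = 1 + if i = j then 2 else 0 := by
    split_ifs with hij
    · subst hij
      simp only [show ∀ x : ℝ, (x * x) ^ 2 = x ^ 4 from fun x => by ring]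
      rw [hcoord, integral_pow_four_gaussianReal]
      norm_num
    · have hind : iIndepFun (fun (i : Fin n) (z : Fin n → ℝ) => z i)
          (Measure.pi fun _ => gaussianReal 0 1) :=
        iIndepFun_pi (X := fun _ x => x) fun _ => aemeasurable_id
      have hsq := (hind.indepFun hij).comp (measurable_id.pow_const 2) (measurable_id.pow_const 2)
      have hmul := hsq.integral_fun_mul_eq_mul_integral
        ((measurable_pi_apply i).pow_const 2).aestronglyMeasurable
        ((measurable_pi_apply j).pow_const 2).aestronglyMeasurable
      simp only [Function.comp_apply, id, hcoord, integral_sq_gaussianReal] at hmul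
      simpa [mul_pow] using hmul
  simp only [hentry, Finset.sum_add_distrib]
  simp
  ring

/-- **Proposition 9 (simplified form, `k_n ≤ n+2`).**
`(1/n)·Tr(E[(Cov(X|Y))²]) ≤ (n+2)/snr²`. -/
theorem derivative_mmse_simple_bound {Ω : Type*} [MeasurableSpace Ω] (μ : Measure Ω) [IsProbabilityMeasure μ]
    (n : ℕ) (hn : 1 ≤ n) (X Z : Ω → Fin n → ℝ)
    (hX : Measurable X) (hZ : Measurable Z)
    (hZlaw : Measure.map Z μ = Measure.pi fun _ : Fin n => gaussianReal 0 1)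
    (hindep : IndepFun X Z μ)
    (hX2 : Integrable (fun ω => ∑ i, (X ω i) ^ 2) μ)
    (snr : ℝ) (hsnr : 0 < snr) :
    (1 / (n : ℝ)) * trExp μ (fun ω => (covMat (obsSigma X Z snr) μ X ω) ^ 2) ≤
      ((n : ℝ) + 2) / snr ^ 2 := by
  have hs : 0 < √snr := sqrt_pos.2 hsnr
  have hobs : Measurable (obs X Z snr) := by
    unfold obs
    fun_prop
  have hm : obsSigma X Z snr ≤ ‹MeasurableSpace Ω› := hobs.comap_le
  have hXmem (i : Fin n) : MemLp (fun ω => X ω i) 2 μ := by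
    rw [memLp_two_iff_integrable_sq (by fun_prop)]
    refine hX2.mono' (by fun_prop) (.of_forall fun ω => ?_)
    rw [norm_of_nonneg (sq_nonneg _)]
    exact Finset.single_le_sum (f := fun k => X ω k ^ 2) (fun k _ => sq_nonneg _)
      (Finset.mem_univ i)
  have hZ4 (i : Fin n) : MemLp (fun ω => Z ω i) 4 μ := by
    have hid : MemLp (fun z : Fin n → ℝ => z i) 4 (Measure.pi fun _ => gaussianReal 0 1) :=
      (memLp_id_gaussianReal 4).comp_measurePreserving
        (measurePreserving_eval (fun _ : Fin n => gaussianReal 0 1) i)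
    exact hid.comp_measurePreserving ⟨hZ, hZlaw⟩
  have hZmem (i : Fin n) : MemLp (fun ω => Z ω i) 2 μ := (hZ4 i).mono_exponent (by norm_num)
  have hZZ (i j : Fin n) : MemLp (fun ω => Z ω i * Z ω j) 2 μ := by
    have : ENNReal.HolderTriple 4 4 2 := ⟨by
      rw [show (4 : ENNReal) = 2 * 2 by norm_num, ENNReal.mul_inv (by simp) (by simp), ← mul_add,
        ENNReal.inv_two_add_inv_two, mul_one]⟩
    exact (hZ4 j).mul (hZ4 i)
  have hY (i : Fin n) : MemLp (fun ω => (√snr)⁻¹ * obs X Z snr ω i) 2 μ :=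
    (((hXmem i).const_mul (√snr)).add (hZmem i)).const_mul _
  have hYm (i : Fin n) :
      StronglyMeasurable[obsSigma X Z snr] fun ω => (√snr)⁻¹ * obs X Z snr ω i :=
    (((measurable_pi_apply i).comp (comap_measurable (obs X Z snr))).const_mul _).stronglyMeasurable
  have hXeq : X = fun ω k => (√snr)⁻¹ * obs X Z snr ω k + (-(√snr)⁻¹) * Z ω k := by
    ext ω k
    simp only [obs]
    field_simp
    ring
  have hcov : ∀ᵐ ω ∂μ, ∀ i j, covMat (obsSigma X Z snr) μ X ω i j
      = snr⁻¹ * covMat (obsSigma X Z snr) μ Z ω i j := by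
    have h := covMat_add_const_mul μ hm (U := fun ω k => (√snr)⁻¹ * obs X Z snr ω k)
      hYm hY hZmem (-(√snr)⁻¹)
    rwa [← hXeq, neg_sq, inv_pow, sq_sqrt hsnr.le] at h
  set G : Ω → ℝ := fun ω => (snr ^ 2)⁻¹ *
    ∑ i, ∑ j, (μ[fun ω' => (Z ω' i * Z ω' j) ^ 2 | obsSigma X Z snr]) ω with hG
  have hbound : ∀ᵐ ω ∂μ, ∑ i, ∑ j, covMat (obsSigma X Z snr) μ X ω i j ^ 2 ≤ G ω := by
    filter_upwards [hcov, sum_sq_covMat_ae_le hm μ hZmem hZZ] with ω h1 h2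
    simp only [h1, mul_pow, ← Finset.mul_sum, inv_pow]
    exact mul_le_mul_of_nonneg_left h2 (by positivity)
  have hGint : Integrable G μ :=
    (integrable_finsetSum _ fun i _ => integrable_finsetSum _ fun j _ =>
      integrable_condExp).const_mul _
  have hGval : ∫ ω, G ω ∂μ = (snr ^ 2)⁻¹ * (n * (n + 2)) := by
    rw [hG, integral_const_mul, integral_finsetSum _ fun i _ =>
      integrable_finsetSum _ fun j _ => integrable_condExp]
    simp only [integral_finsetSum _ fun j _ => integrable_condExp, integral_condExp hm]
    rw [← sum_integral_sq_mul_sq_gaussian n]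
    simp only [← hZlaw]
    congr 1
    refine Finset.sum_congr rfl fun i _ => Finset.sum_congr rfl fun j _ => ?_
    rw [integral_map hZ.aemeasurable (by fun_prop)]
  have hsqint (i j : Fin n) :
      Integrable (fun ω => covMat (obsSigma X Z snr) μ X ω i j ^ 2) μ := by
    refine hGint.mono' ?_ ?_
    · have hmeas : AEStronglyMeasurable (fun ω => covMat (obsSigma X Z snr) μ X ω i j) μ :=
        integrable_condExp.aestronglyMeasurable.sub
          (integrable_condExp.aestronglyMeasurable.mul integrable_condExp.aestronglyMeasurable)
      exact hmeas.pow 2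
    · filter_upwards [hbound] with ω h
      rw [norm_of_nonneg (sq_nonneg _)]
      refine le_trans ?_ h
      exact (Finset.single_le_sum (f := fun l => covMat (obsSigma X Z snr) μ X ω i l ^ 2)
          (fun l _ => sq_nonneg _) (Finset.mem_univ j)).trans
        (Finset.single_le_sum (f := fun k => ∑ l, covMat (obsSigma X Z snr) μ X ω k l ^ 2)
          (fun k _ => Finset.sum_nonneg fun l _ => sq_nonneg _) (Finset.mem_univ i))
  have htrace : trExp μ (fun ω => (covMat (obsSigma X Z snr) μ X ω) ^ 2)
      = ∫ ω, ∑ i, ∑ j, covMat (obsSigma X Z snr) μ X ω i j ^ 2 ∂μ := by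
    rw [integral_finsetSum _ fun i _ => integrable_finsetSum _ fun j _ => hsqint i j]
    simp only [trExp, expMat, Matrix.trace, Matrix.diag_apply, Matrix.of_apply]
    refine Finset.sum_congr rfl fun i _ => integral_congr_ae (.of_forall fun ω => ?_)
    simp only [sq, Matrix.mul_apply]
    exact Finset.sum_congr rfl fun j _ => by rw [covMat_symm _ _ _ _ j i]
  have hle : trExp μ (fun ω => (covMat (obsSigma X Z snr) μ X ω) ^ 2)
      ≤ (snr ^ 2)⁻¹ * (n * (n + 2)) := by
    rw [htrace, ← hGval]
    exact integral_mono_ae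
      (integrable_finsetSum _ fun i _ => integrable_finsetSum _ fun j _ => hsqint i j)
      hGint hbound
  have hn0 : (0 : ℝ) < n := by exact_mod_cast hn
  calc (1 / (n : ℝ)) * trExp μ (fun ω => (covMat (obsSigma X Z snr) μ X ω) ^ 2)
      ≤ (1 / (n : ℝ)) * ((snr ^ 2)⁻¹ * (n * (n + 2))) :=
        mul_le_mul_of_nonneg_left hle (by positivity)
    _ = ((n : ℝ) + 2) / snr ^ 2 := by field_simp

end
end

section
/- (Proposition 10, lower bound on the squared Fisher information of the output.) For every n ≥ 1, every random vector X in ℝⁿ with (1/n)·E[‖X‖²] ≤ 1 (equivalently (1/n)·Tr(E[X Xᵀ]) ≤ 1), and every snr > 0, Tr((Iₙ − snr·E[Cov(X|Y_snr)])²) ≥ n/(1+snr)². Moreover, equality holds when X ~ N(0, Iₙ). -/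
open MeasureTheory ProbabilityTheory Real Matrix

noncomputable section

section StandardGaussian

variable {Ω : Type*} [MeasurableSpace Ω] {μ : Measure Ω} {n : ℕ} {X : Ω → Fin n → ℝ}

lemma hasLaw_eval_of_map_eq_pi_gaussianReal (hX : Measurable X)
    (hlaw : Measure.map X μ = Measure.pi fun _ : Fin n => gaussianReal 0 1) (i : Fin n) :
    HasLaw (fun ω => X ω i) (gaussianReal 0 1) μ where
  aemeasurable := by fun_prop
  map_eq := by
    have h := (measurePreserving_eval (fun _ : Fin n => gaussianReal 0 1) i).map_eq
    rw [← hlaw, Measure.map_map (measurable_pi_apply i) hX] at h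
    exact h

lemma memLp_eval_of_map_eq_pi_gaussianReal (hX : Measurable X)
    (hlaw : Measure.map X μ = Measure.pi fun _ : Fin n => gaussianReal 0 1) (i : Fin n) :
    MemLp (fun ω => X ω i) 2 μ :=
  (hasLaw_eval_of_map_eq_pi_gaussianReal hX hlaw i).hasGaussianLaw.memLp_two

lemma integral_eval_of_map_eq_pi_gaussianReal (hX : Measurable X)
    (hlaw : Measure.map X μ = Measure.pi fun _ : Fin n => gaussianReal 0 1) (i : Fin n) :
    ∫ ω, X ω i ∂μ = 0 := by
  rw [(hasLaw_eval_of_map_eq_pi_gaussianReal hX hlaw i).integral_eq]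
  exact integral_id_gaussianReal

variable [IsProbabilityMeasure μ]

lemma iIndepFun_eval_of_map_eq_pi_gaussianReal (hX : Measurable X)
    (hlaw : Measure.map X μ = Measure.pi fun _ : Fin n => gaussianReal 0 1) :
    iIndepFun (fun i ω => X ω i) μ := by
  rw [iIndepFun_iff_map_fun_eq_pi_map (by fun_prop)]
  simp_rw [fun i => (hasLaw_eval_of_map_eq_pi_gaussianReal hX hlaw i).map_eq]
  exact hlaw

lemma hasGaussianLaw_of_map_eq_pi_gaussianReal (hX : Measurable X)
    (hlaw : Measure.map X μ = Measure.pi fun _ : Fin n => gaussianReal 0 1) :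
    HasGaussianLaw X μ :=
  (iIndepFun_eval_of_map_eq_pi_gaussianReal hX hlaw).hasGaussianLaw
    fun i => (hasLaw_eval_of_map_eq_pi_gaussianReal hX hlaw i).hasGaussianLaw

lemma integral_eval_mul_eval_of_map_eq_pi_gaussianReal (hX : Measurable X)
    (hlaw : Measure.map X μ = Measure.pi fun _ : Fin n => gaussianReal 0 1) (i j : Fin n) :
    ∫ ω, X ω i * X ω j ∂μ = (1 : Matrix (Fin n) (Fin n) ℝ) i j := by
  have h0 := integral_eval_of_map_eq_pi_gaussianReal hX hlaw
  by_cases hij : i = j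
  · subst hij
    have hvar := (hasLaw_eval_of_map_eq_pi_gaussianReal hX hlaw i).variance_eq
    rw [variance_of_integral_eq_zero (by fun_prop) (h0 i), variance_id_gaussianReal] at hvar
    simpa [sq] using hvar
  · have hind := (iIndepFun_eval_of_map_eq_pi_gaussianReal hX hlaw).indepFun hij
    have h := hind.integral_fun_mul_eq_mul_integral (by fun_prop) (by fun_prop)
    rw [h, h0 i, zero_mul, Matrix.one_apply_ne hij]

end StandardGaussian

section ConditionalExpectation

variable {Ω : Type*} {m : MeasurableSpace Ω} [m₀ : MeasurableSpace Ω] {μ : Measure Ω}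
  [IsProbabilityMeasure μ]

/-- The error of `μ[f | m]` in `L²` is at most that of any `m`-measurable estimator. -/
lemma integral_sq_sub_integral_condExp_sq_le (hm : m ≤ m₀) {f h : Ω → ℝ} (hf : MemLp f 2 μ)
    (hh : MemLp h 2 μ) (hhm : StronglyMeasurable[m] h) :
    ∫ ω, f ω ^ 2 ∂μ - ∫ ω, (μ[f | m]) ω ^ 2 ∂μ ≤ ∫ ω, (f ω - h ω) ^ 2 ∂μ := by
  have hg : MemLp (μ[f | m]) 2 μ := hf.condExp (by norm_num)
  have expand : ∀ {u : Ω → ℝ}, MemLp u 2 μ → ∫ ω, (u ω - h ω) ^ 2 ∂μ =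
      ∫ ω, u ω ^ 2 ∂μ - 2 * ∫ ω, u ω * h ω ∂μ + ∫ ω, h ω ^ 2 ∂μ := by
    intro u hu
    have huh : Integrable (fun ω => u ω * h ω) μ := hu.integrable_mul hh
    have hexp : (fun ω => (u ω - h ω) ^ 2) = fun ω => u ω ^ 2 - 2 * (u ω * h ω) + h ω ^ 2 := by
      ext ω
      ring
    rw [hexp, integral_add (by exact hu.integrable_sq.sub (huh.const_mul 2)) hh.integrable_sq,
      integral_sub hu.integrable_sq (huh.const_mul 2), integral_const_mul]
  have hpull : ∫ ω, f ω * h ω ∂μ = ∫ ω, (μ[f | m]) ω * h ω ∂μ := by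
    rw [← integral_condExp hm]
    exact integral_congr_ae (condExp_mul_of_stronglyMeasurable_right hhm (hf.integrable_mul hh)
      (hf.integrable one_le_two))
  have hnonneg : 0 ≤ ∫ ω, ((μ[f | m]) ω - h ω) ^ 2 ∂μ := integral_nonneg fun ω => sq_nonneg _
  rw [expand hg] at hnonneg
  rw [expand hf, hpull]
  linarith

lemma expMat_covMat_apply (hm : m ≤ m₀) {n : ℕ} {V : Ω → Fin n → ℝ}
    (hV : ∀ i, MemLp (fun ω => V ω i) 2 μ) (i j : Fin n) :
    expMat μ (covMat m μ V) i j = ∫ ω, V ω i * V ω j ∂μ -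
      ∫ ω, (μ[fun ω' => V ω' i | m]) ω * (μ[fun ω' => V ω' j | m]) ω ∂μ := by
  have hce (i : Fin n) : MemLp (μ[fun ω' => V ω' i | m]) 2 μ := (hV i).condExp (by norm_num)
  simp only [expMat, covMat, ceMat, ceVec, Matrix.of_apply, Matrix.sub_apply,
    Matrix.vecMulVec_apply]
  have hmul : Integrable
      (fun ω => (μ[fun ω' => V ω' i | m]) ω * (μ[fun ω' => V ω' j | m]) ω) μ :=
    (hce i).integrable_mul (hce j)
  rw [integral_sub integrable_condExp hmul, integral_condExp hm]

end ConditionalExpectation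

/-- Cauchy-Schwarz for the Hilbert-Schmidt inner product with the identity. -/
lemma trace_sq_le_card_mul_trace_sq_of_isSymm {n : ℕ} {A : Matrix (Fin n) (Fin n) ℝ}
    (hA : A.IsSymm) : A.trace ^ 2 ≤ n * (A ^ 2).trace := by
  have hdiag : ∑ i, A i i ^ 2 ≤ (A ^ 2).trace := by
    simp only [Matrix.trace, Matrix.diag_apply, pow_two, Matrix.mul_apply]
    refine Finset.sum_le_sum fun i _ => ?_
    refine Finset.single_le_sum (f := fun j => A i j * A j i) (fun j _ => ?_) (Finset.mem_univ i)
    simp only [hA.apply i j]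
    exact mul_self_nonneg _
  have hcs := sq_sum_le_card_mul_sum_sq (s := Finset.univ) (f := fun i => A i i)
  rw [Finset.card_univ, Fintype.card_fin] at hcs
  exact hcs.trans (mul_le_mul_of_nonneg_left hdiag n.cast_nonneg)

section GaussianChannel

variable {Ω : Type*} [MeasurableSpace Ω] {μ : Measure Ω} {n : ℕ}
  {X Z : Ω → Fin n → ℝ} {snr : ℝ}

lemma measurable_obs (hX : Measurable X) (hZ : Measurable Z) : Measurable (obs X Z snr) := by
  unfold obs
  fun_prop

lemma obsSigma_le (hX : Measurable X) (hZ : Measurable Z) :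
    obsSigma X Z snr ≤ ‹MeasurableSpace Ω› :=
  (measurable_obs hX hZ).comap_le

lemma stronglyMeasurable_obs_eval (i : Fin n) :
    StronglyMeasurable[obsSigma X Z snr] fun ω => obs X Z snr ω i :=
  ((measurable_pi_apply i).comp (comap_measurable (obs X Z snr))).stronglyMeasurable

lemma memLp_obs_eval (hX2 : ∀ i, MemLp (fun ω => X ω i) 2 μ)
    (hZ2 : ∀ i, MemLp (fun ω => Z ω i) 2 μ) (i : Fin n) :
    MemLp (fun ω => obs X Z snr ω i) 2 μ :=
  ((hX2 i).const_mul _).add (hZ2 i)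

variable [IsProbabilityMeasure μ]

/-- The second moments of two linear combinations of input and noise. -/
lemma integral_linear_combination_mul (hX : Measurable X) (hZ : Measurable Z)
    (hZlaw : Measure.map Z μ = Measure.pi fun _ : Fin n => gaussianReal 0 1)
    (hindep : IndepFun X Z μ) (hX2 : ∀ i, MemLp (fun ω => X ω i) 2 μ) (a b c d : ℝ)
    (i j : Fin n) :
    ∫ ω, (a * X ω i + b * Z ω i) * (c * X ω j + d * Z ω j) ∂μ =
      a * c * ∫ ω, X ω i * X ω j ∂μ + b * d * (1 : Matrix (Fin n) (Fin n) ℝ) i j := by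
  have hZ2 := memLp_eval_of_map_eq_pi_gaussianReal hZ hZlaw
  have hcross (k l : Fin n) : ∫ ω, X ω k * Z ω l ∂μ = 0 := by
    have hkl := hindep.comp (measurable_pi_apply k) (measurable_pi_apply l)
    have h := hkl.integral_fun_mul_eq_mul_integral (by fun_prop) (by fun_prop)
    simp only [Function.comp_apply] at h
    rw [h, integral_eval_of_map_eq_pi_gaussianReal hZ hZlaw, mul_zero]
  have hXX : Integrable (fun ω => X ω i * X ω j) μ := (hX2 i).integrable_mul (hX2 j)
  have hXZ : Integrable (fun ω => X ω i * Z ω j) μ := (hX2 i).integrable_mul (hZ2 j)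
  have hZX : Integrable (fun ω => X ω j * Z ω i) μ := (hX2 j).integrable_mul (hZ2 i)
  have hZZ : Integrable (fun ω => Z ω i * Z ω j) μ := (hZ2 i).integrable_mul (hZ2 j)
  have hexp : (fun ω => (a * X ω i + b * Z ω i) * (c * X ω j + d * Z ω j)) = fun ω =>
      a * c * (X ω i * X ω j) + a * d * (X ω i * Z ω j) + b * c * (X ω j * Z ω i)
        + b * d * (Z ω i * Z ω j) := by
    ext ω
    ring
  rw [hexp, integral_add (by fun_prop) (by fun_prop), integral_add (by fun_prop) (by fun_prop),
    integral_add (by fun_prop) (by fun_prop)]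
  simp only [integral_const_mul, hcross,
    integral_eval_mul_eval_of_map_eq_pi_gaussianReal hZ hZlaw]
  ring

/-- The mean square error of the linear estimator that is optimal for a standard Gaussian input
bounds the minimum mean square error of each coordinate. -/
lemma expMat_covMat_apply_self_le (hX : Measurable X) (hZ : Measurable Z)
    (hZlaw : Measure.map Z μ = Measure.pi fun _ : Fin n => gaussianReal 0 1)
    (hindep : IndepFun X Z μ) (hX2 : ∀ i, MemLp (fun ω => X ω i) 2 μ) (hsnr : 0 < snr)
    (i : Fin n) :
    expMat μ (covMat (obsSigma X Z snr) μ X) i i ≤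
      (∫ ω, X ω i ^ 2 ∂μ + snr) / (1 + snr) ^ 2 := by
  have hZ2 := memLp_eval_of_map_eq_pi_gaussianReal hZ hZlaw
  have h := integral_sq_sub_integral_condExp_sq_le (obsSigma_le (snr := snr) hX hZ) (hX2 i)
    ((memLp_obs_eval hX2 hZ2 i).const_mul (√snr / (1 + snr)))
    ((stronglyMeasurable_obs_eval i).const_mul (√snr / (1 + snr)))
  rw [expMat_covMat_apply (obsSigma_le hX hZ) hX2]
  simp only [← sq]
  refine h.trans_eq ?_
  have hs : √snr ^ 2 = snr := Real.sq_sqrt hsnr.le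
  have hlin (ω : Ω) : (X ω i - √snr / (1 + snr) * obs X Z snr ω i) ^ 2 =
      (1 / (1 + snr) * X ω i + -(√snr / (1 + snr)) * Z ω i) *
        (1 / (1 + snr) * X ω i + -(√snr / (1 + snr)) * Z ω i) := by
    have : 1 / (1 + snr) = 1 - √snr / (1 + snr) * √snr := by
      field_simp
      linarith
    rw [this, obs]
    ring
  simp only [hlin]
  rw [integral_linear_combination_mul hX hZ hZlaw hindep hX2, Matrix.one_apply_eq]
  simp only [← sq]
  field_simp
  rw [hs]

/-- For a standard Gaussian input the conditional mean is linear in the observation. -/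
lemma condExp_obsSigma_of_gaussian (hX : Measurable X) (hZ : Measurable Z)
    (hXlaw : Measure.map X μ = Measure.pi fun _ : Fin n => gaussianReal 0 1)
    (hZlaw : Measure.map Z μ = Measure.pi fun _ : Fin n => gaussianReal 0 1)
    (hindep : IndepFun X Z μ) (hsnr : 0 < snr) (i : Fin n) :
    μ[fun ω => X ω i | obsSigma X Z snr] =ᵐ[μ]
      fun ω => √snr / (1 + snr) * obs X Z snr ω i := by
  have hX2 := memLp_eval_of_map_eq_pi_gaussianReal hX hXlaw
  have hZ2 := memLp_eval_of_map_eq_pi_gaussianReal hZ hZlaw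
  have hm := obsSigma_le (snr := snr) hX hZ
  set W : Fin n → Ω → ℝ := fun k ω => 1 * X ω k + -√snr * Z ω k with hW
  have hW0 (k : Fin n) : ∫ ω, W k ω ∂μ = 0 := by
    rw [integral_add (((hX2 k).integrable one_le_two).const_mul _)
      (((hZ2 k).integrable one_le_two).const_mul _), integral_const_mul, integral_const_mul,
      integral_eval_of_map_eq_pi_gaussianReal hX hXlaw,
      integral_eval_of_map_eq_pi_gaussianReal hZ hZlaw]
    simp
  have hWm (k : Fin n) : MemLp (W k) 2 μ := ((hX2 k).const_mul _).add ((hZ2 k).const_mul _)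
  have hjoint : HasGaussianLaw
      (fun ω => (fun k => W k ω, fun k => obs X Z snr ω k)) μ := by
    have hXZ := hindep.hasGaussianLaw (hasGaussianLaw_of_map_eq_pi_gaussianReal hX hXlaw)
      (hasGaussianLaw_of_map_eq_pi_gaussianReal hZ hZlaw)
    let fst := ContinuousLinearMap.fst ℝ (Fin n → ℝ) (Fin n → ℝ)
    let snd := ContinuousLinearMap.snd ℝ (Fin n → ℝ) (Fin n → ℝ)
    exact hXZ.map (((1 : ℝ) • fst + (-√snr) • snd).prod (√snr • fst + snd))
  have hWY : IndepFun (fun ω k => W k ω) (obs X Z snr) μ := by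
    refine hjoint.indepFun_of_covariance_eval (X := W) (Y := fun k ω => obs X Z snr ω k)
      fun k l => ?_
    rw [covariance_eq_sub (hWm k) (memLp_obs_eval hX2 hZ2 l), hW0, zero_mul, sub_zero]
    have h := integral_linear_combination_mul hX hZ hZlaw hindep hX2 1 (-√snr) (√snr) 1 k l
    rw [integral_eval_mul_eval_of_map_eq_pi_gaussianReal hX hXlaw] at h
    simpa [hW, obs] using h
  have hWcond : μ[W i | obsSigma X Z snr] =ᵐ[μ] fun _ => 0 := by
    have hWmeas : Measurable (fun ω k => W k ω) := by fun_prop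
    have h := condExp_indep_eq (f := W i) hWmeas.comap_le hm
      ((measurable_pi_apply i).comp (comap_measurable (fun ω k => W k ω))).stronglyMeasurable hWY
    rwa [hW0] at h
  have hXdecomp : (fun ω => X ω i) =
      (1 / (1 + snr)) • W i + fun ω => √snr / (1 + snr) * obs X Z snr ω i := by
    ext ω
    simp only [hW, obs, Pi.add_apply, Pi.smul_apply, smul_eq_mul]
    have hs : √snr ^ 2 = snr := Real.sq_sqrt hsnr.le
    field_simp
    linear_combination (-X ω i) * hs
  have hYint : Integrable (fun ω => √snr / (1 + snr) * obs X Z snr ω i) μ :=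
    ((memLp_obs_eval hX2 hZ2 i).integrable one_le_two).const_mul _
  have hYcond := condExp_of_stronglyMeasurable hm
    ((stronglyMeasurable_obs_eval (X := X) (Z := Z) (snr := snr) i).const_mul (√snr / (1 + snr)))
    hYint
  rw [hXdecomp]
  filter_upwards [condExp_add (((hWm i).integrable one_le_two).smul (1 / (1 + snr))) hYint
    (obsSigma X Z snr), condExp_smul (μ := μ) (1 / (1 + snr)) (W i) (obsSigma X Z snr), hWcond]
    with ω hadd hsmul hzero
  rw [hadd, Pi.add_apply, hsmul, Pi.smul_apply, hzero, hYcond, smul_zero, zero_add]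

lemma expMat_covMat_of_gaussian (hX : Measurable X) (hZ : Measurable Z)
    (hXlaw : Measure.map X μ = Measure.pi fun _ : Fin n => gaussianReal 0 1)
    (hZlaw : Measure.map Z μ = Measure.pi fun _ : Fin n => gaussianReal 0 1)
    (hindep : IndepFun X Z μ) (hsnr : 0 < snr) :
    expMat μ (covMat (obsSigma X Z snr) μ X) =
      (1 / (1 + snr)) • (1 : Matrix (Fin n) (Fin n) ℝ) := by
  have hX2 := memLp_eval_of_map_eq_pi_gaussianReal hX hXlaw
  ext i j
  rw [expMat_covMat_apply (obsSigma_le hX hZ) hX2]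
  have hce : ∫ ω, (μ[fun ω' => X ω' i | obsSigma X Z snr]) ω *
      (μ[fun ω' => X ω' j | obsSigma X Z snr]) ω ∂μ =
      (√snr / (1 + snr)) ^ 2 * ∫ ω, (√snr * X ω i + 1 * Z ω i) * (√snr * X ω j + 1 * Z ω j) ∂μ := by
    rw [← integral_const_mul]
    refine integral_congr_ae ?_
    filter_upwards [condExp_obsSigma_of_gaussian hX hZ hXlaw hZlaw hindep hsnr i,
      condExp_obsSigma_of_gaussian hX hZ hXlaw hZlaw hindep hsnr j] with ω hi hj
    simp only [hi, hj, obs]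
    ring
  have hs : √snr ^ 2 = snr := Real.sq_sqrt hsnr.le
  rw [hce, integral_linear_combination_mul hX hZ hZlaw hindep hX2,
    integral_eval_mul_eval_of_map_eq_pi_gaussianReal hX hXlaw, Matrix.smul_apply, smul_eq_mul,
    div_pow, ← sq, hs]
  field_simp
  ring

end GaussianChannel

/-- **Proposition 10 (lower bound on the squared Fisher information of the output).**
If `(1/n)·E[‖X‖²] ≤ 1` then `Tr((I − snr·E[Cov(X|Y)])²) ≥ n/(1+snr)²`, with equality
when `X ~ N(0, Iₙ)`. -/
theorem fisher_information_squared_lower_bound {Ω : Type*} [MeasurableSpace Ω] (μ : Measure Ω) [IsProbabilityMeasure μ]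
    (n : ℕ) (hn : 1 ≤ n) (X Z : Ω → Fin n → ℝ)
    (hX : Measurable X) (hZ : Measurable Z)
    (hZlaw : Measure.map Z μ = Measure.pi fun _ : Fin n => gaussianReal 0 1)
    (hindep : IndepFun X Z μ)
    (hX2 : Integrable (fun ω => ∑ i, (X ω i) ^ 2) μ)
    (hpow : (1 / (n : ℝ)) * ∫ ω, ∑ i, (X ω i) ^ 2 ∂μ ≤ 1)
    (snr : ℝ) (hsnr : 0 < snr) :
    (n : ℝ) / (1 + snr) ^ 2 ≤
      Matrix.trace (((1 : Matrix (Fin n) (Fin n) ℝ)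
        - snr • expMat μ (covMat (obsSigma X Z snr) μ X)) ^ 2) ∧
    ((Measure.map X μ = Measure.pi fun _ : Fin n => gaussianReal 0 1) →
      Matrix.trace (((1 : Matrix (Fin n) (Fin n) ℝ)
        - snr • expMat μ (covMat (obsSigma X Z snr) μ X)) ^ 2) = (n : ℝ) / (1 + snr) ^ 2) := by
  have hn0 : (0 : ℝ) < n := by exact_mod_cast hn
  have hsnr1 : 0 < 1 + snr := by linarith
  have hXsq (i : Fin n) : MemLp (fun ω => X ω i) 2 μ := by
    rw [memLp_two_iff_integrable_sq (by fun_prop)]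
    refine hX2.mono' (by fun_prop) (.of_forall fun ω => ?_)
    rw [Real.norm_of_nonneg (sq_nonneg _)]
    exact Finset.single_le_sum (f := fun j => X ω j ^ 2) (fun j _ => sq_nonneg _)
      (Finset.mem_univ i)
  refine ⟨?_, fun hXlaw => ?_⟩
  · set S := expMat μ (covMat (obsSigma X Z snr) μ X) with hS
    have hpow' : ∑ i, ∫ ω, X ω i ^ 2 ∂μ ≤ n := by
      rw [← integral_finsetSum _ fun i _ => (hXsq i).integrable_sq]
      rwa [one_div, inv_mul_le_iff₀ hn0, mul_one] at hpow
    have htrS : S.trace ≤ n / (1 + snr) := by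
      calc S.trace ≤ ∑ i, (∫ ω, X ω i ^ 2 ∂μ + snr) / (1 + snr) ^ 2 :=
            Finset.sum_le_sum fun i _ =>
              expMat_covMat_apply_self_le hX hZ hZlaw hindep hXsq hsnr i
        _ = (∑ i, ∫ ω, X ω i ^ 2 ∂μ + n * snr) / (1 + snr) ^ 2 := by
            rw [← Finset.sum_div, Finset.sum_add_distrib]
            simp
        _ ≤ (n + n * snr) / (1 + snr) ^ 2 := by gcongr
        _ = n / (1 + snr) := by field_simp
    have hsymm : (1 - snr • S).IsSymm := by
      refine Matrix.IsSymm.ext fun i j => ?_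
      have hij : S j i = S i j := by
        simp only [hS, expMat_covMat_apply (obsSigma_le hX hZ) hXsq, mul_comm]
      simp only [Matrix.sub_apply, Matrix.smul_apply, hij, Matrix.one_apply, eq_comm]
    have htr : n / (1 + snr) ≤ (1 - snr • S).trace := by
      rw [Matrix.trace_sub, Matrix.trace_smul, Matrix.trace_one, Fintype.card_fin, smul_eq_mul]
      have hmul := mul_le_mul_of_nonneg_left htrS hsnr.le
      have : (n : ℝ) / (1 + snr) = n - snr * (n / (1 + snr)) := by
        field_simp
        ring
      linarith
    have hcs := trace_sq_le_card_mul_trace_sq_of_isSymm hsymm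
    have hsq : ((n : ℝ) / (1 + snr)) ^ 2 ≤ (1 - snr • S).trace ^ 2 := by gcongr
    have hfac : (n : ℝ) * (n / (1 + snr) ^ 2) = (n / (1 + snr)) ^ 2 := by
      rw [div_pow]
      ring
    exact le_of_mul_le_mul_left (hfac.trans_le (hsq.trans hcs)) hn0
  · have hJ : (1 : Matrix (Fin n) (Fin n) ℝ) - snr • expMat μ (covMat (obsSigma X Z snr) μ X) =
        (1 / (1 + snr)) • (1 : Matrix (Fin n) (Fin n) ℝ) := by
      rw [expMat_covMat_of_gaussian hX hZ hXlaw hZlaw hindep hsnr, smul_smul]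
      nth_rewrite 1 [← one_smul ℝ (1 : Matrix (Fin n) (Fin n) ℝ)]
      rw [← sub_smul]
      congr 1
      field_simp
      ring
    rw [hJ, smul_pow, one_pow, Matrix.trace_smul, Matrix.trace_one, Fintype.card_fin, smul_eq_mul]
    field_simp

end
end

section
/- (Equation (48), MMSE bound for the three-point full-power input X_a.) For every a ≥ 1, let X_a be the random variable taking values −a, 0, a with probabilities 1/(2a²), 1 − 1/a², 1/(2a²) respectively. Then E[X_a²] = 1, and for every snr > 0, mmse(X_a, snr) ≤ min( 1, 4·(a²+1)·e^{−a²·snr/8} ). -/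
open MeasureTheory ProbabilityTheory Real
open scoped ENNReal

noncomputable section

/-- The scalar observation `Y_snr = √snr · X + Z`. -/
def obsS {Ω : Type*} (X Z : Ω → ℝ) (snr : ℝ) : Ω → ℝ :=
  fun ω => Real.sqrt snr * X ω + Z ω

/-- The σ-algebra generated by the observation `Y_snr`. -/
def obsSigmaS {Ω : Type*} [MeasurableSpace Ω] (X Z : Ω → ℝ) (snr : ℝ) : MeasurableSpace Ω :=
  MeasurableSpace.comap (obsS X Z snr) inferInstance

/-- `mmse(X, snr) = E[(X − E[X | Y_snr])²]`. -/
def mmseS {Ω : Type*} [MeasurableSpace Ω] (μ : Measure Ω) (X Z : Ω → ℝ) (snr : ℝ) : ℝ :=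
  ∫ ω, (X ω - (μ[X | obsSigmaS X Z snr]) ω) ^ 2 ∂μ

/-- The law of `X_a`: values `−a, 0, a` with probabilities `1/(2a²), 1−1/a², 1/(2a²)`. -/
def XaLaw (a : ℝ) : Measure ℝ :=
  ENNReal.ofReal (1 / (2 * a ^ 2)) • Measure.dirac (-a)
    + ENNReal.ofReal (1 - 1 / a ^ 2) • Measure.dirac 0
    + ENNReal.ofReal (1 / (2 * a ^ 2)) • Measure.dirac a

/-- The conditional expectation minimizes the mean squared error among square-integrable
`m`-measurable estimators. -/
lemma integral_sub_condExp_sq_le {Ω : Type*} {m m₀ : MeasurableSpace Ω} {μ : Measure Ω}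
    [IsProbabilityMeasure μ] (hm : m ≤ m₀) {X F : Ω → ℝ} (hX : MemLp X 2 μ) (hF : MemLp F 2 μ)
    (hFm : StronglyMeasurable[m] F) :
    ∫ ω, (X ω - (μ[X | m]) ω) ^ 2 ∂μ ≤ ∫ ω, (X ω - F ω) ^ 2 ∂μ := by
  have hXF : MemLp (X - F) 2 μ := hX.sub hF
  have hcond : μ[X - F | m] =ᵐ[μ] μ[X | m] - F := by
    have h := condExp_sub (hX.integrable one_le_two) (hF.integrable one_le_two) m
    rwa [condExp_of_stronglyMeasurable hm hFm (hF.integrable one_le_two)] at h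
  calc ∫ ω, (X ω - (μ[X | m]) ω) ^ 2 ∂μ
      = ∫ ω, ((X - F - μ[X - F | m]) ^ 2) ω ∂μ := by
        refine integral_congr_ae ?_
        filter_upwards [hcond] with ω hω
        simp only [Pi.pow_apply, Pi.sub_apply, hω]
        ring
    _ = ∫ ω, (Var[X - F; μ | m]) ω ∂μ := (integral_condExp hm).symm
    _ ≤ Var[X - F; μ] := by
        rw [← integral_condVar_add_variance_condExp hm hXF]
        exact le_add_of_nonneg_right (variance_nonneg _ _)
    _ ≤ ∫ ω, (X ω - F ω) ^ 2 ∂μ := variance_le_expectation_sq hXF.aestronglyMeasurable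

lemma integral_XaLaw {a : ℝ} (ha : 1 ≤ a) (f : ℝ → ℝ) :
    ∫ x, f x ∂(XaLaw a)
      = 1 / (2 * a ^ 2) * f (-a) + (1 - 1 / a ^ 2) * f 0 + 1 / (2 * a ^ 2) * f a := by
  have hfd : ∀ c b : ℝ, Integrable f (ENNReal.ofReal c • Measure.dirac b) := fun c b =>
    (integrable_dirac (by simp)).smul_measure ENNReal.ofReal_ne_top
  have hnonneg : 0 ≤ 1 / (2 * a ^ 2) := by positivity
  have hle : 1 / a ^ 2 ≤ 1 := (div_le_one (by positivity)).2 (one_le_pow₀ ha)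
  rw [XaLaw, integral_add_measure ((hfd _ _).add_measure (hfd _ _)) (hfd _ _),
    integral_add_measure (hfd _ _) (hfd _ _)]
  simp only [integral_smul_measure, integral_dirac, smul_eq_mul, ENNReal.toReal_ofReal hnonneg,
    ENNReal.toReal_ofReal (sub_nonneg.2 hle)]

lemma ae_XaLaw (a : ℝ) : ∀ᵐ x ∂(XaLaw a), x = -a ∨ x = 0 ∨ x = a := by
  have hdirac : ∀ c b : ℝ, b = -a ∨ b = 0 ∨ b = a →
      ∀ᵐ x ∂(ENNReal.ofReal c • Measure.dirac b), x = -a ∨ x = 0 ∨ x = a := by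
    intro c b hb
    refine Measure.ae_smul_measure ?_ _
    simpa [ae_dirac_eq] using hb
  simp only [XaLaw, ae_add_measure_iff]
  exact ⟨⟨hdirac _ _ (by simp), hdirac _ _ (by simp)⟩, hdirac _ _ (by simp)⟩

lemma hasSubgaussianMGF_of_map_eq_gaussianReal {Ω : Type*} [MeasurableSpace Ω] {μ : Measure Ω}
    {Z : Ω → ℝ} {v : NNReal} (hZ : Measurable Z) (hZlaw : μ.map Z = gaussianReal 0 v) :
    HasSubgaussianMGF Z v μ where
  integrable_exp_mul t := by
    have h := integrable_exp_mul_gaussianReal (μ := 0) (v := v) t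
    rw [← hZlaw] at h
    exact h.comp_measurable hZ
  mgf_le t := by simp [mgf_gaussianReal hZlaw]

/-- For `X` independent of `Z`, an event `{Z ∈ s}` factors out of an integral. -/
lemma integral_mul_indicator_of_indepFun {Ω : Type*} [MeasurableSpace Ω] {μ : Measure Ω}
    {X Z : Ω → ℝ} (hX : Measurable X) (hZ : Measurable Z) (hindep : IndepFun X Z μ)
    {g : ℝ → ℝ} (hg : Measurable g) {s : Set ℝ} (hs : MeasurableSet s) :
    ∫ ω, g (X ω) * s.indicator 1 (Z ω) ∂μ = (∫ ω, g (X ω) ∂μ) * μ.real (Z ⁻¹' s) := by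
  have h1 : Measurable (s.indicator (1 : ℝ → ℝ)) := measurable_one.indicator hs
  refine ((hindep.comp hg h1).integral_fun_mul_eq_mul_integral
    (hg.comp hX).aestronglyMeasurable (h1.comp hZ).aestronglyMeasurable).trans ?_
  congr 1
  exact integral_indicator_one (hZ hs)

/-- The decision rule that returns `a` above the threshold `t`, `-a` below `-t` and `0` between. -/
def thresholdDecision (a t y : ℝ) : ℝ := if t < y then a else if y < -t then -a else 0

lemma measurable_thresholdDecision (a t : ℝ) : Measurable (thresholdDecision a t) :=
  Measurable.ite measurableSet_Ioi measurable_const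
    (Measurable.ite measurableSet_Iio measurable_const measurable_const)

lemma abs_thresholdDecision_le (a t y : ℝ) : |thresholdDecision a t y| ≤ |a| := by
  unfold thresholdDecision
  split_ifs <;> simp

lemma sub_thresholdDecision_sq_le {a t x z : ℝ} (ht : 0 ≤ t) {r : ℝ} (hr : r * a = 2 * t)
    (hx : x = -a ∨ x = 0 ∨ x = a) :
    (x - thresholdDecision a t (r * x + z)) ^ 2
      ≤ (a - x) ^ 2 * (Set.Ici t).indicator 1 z + (a + x) ^ 2 * (Set.Iic (-t)).indicator 1 z := by
  unfold thresholdDecision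
  simp only [Set.indicator_apply, Set.mem_Ici, Set.mem_Iic, Pi.one_apply]
  have ha := sq_nonneg a
  rcases hx with hx | hx | hx
  all_goals
    rw [hx]
    split_ifs <;> first | (exfalso; linarith) | nlinarith

/-- **Equation (48) (MMSE bound for the three-point full-power input `X_a`).**
For `a ≥ 1`, `E[X_a²] = 1` and `mmse(X_a, snr) ≤ min(1, 4(a²+1)e^{−a²·snr/8})` for all
`snr > 0`. -/
theorem Xa_full_power_and_mmse_bound {Ω : Type*} [MeasurableSpace Ω] (μ : Measure Ω)
    [IsProbabilityMeasure μ] (a : ℝ) (ha : 1 ≤ a) (X Z : Ω → ℝ)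
    (hX : Measurable X) (hZ : Measurable Z)
    (hXlaw : Measure.map X μ = XaLaw a)
    (hZlaw : Measure.map Z μ = gaussianReal 0 1)
    (hindep : IndepFun X Z μ) :
    (∫ ω, (X ω) ^ 2 ∂μ) = 1 ∧
    ∀ snr : ℝ, 0 < snr →
      mmseS μ X Z snr ≤ min 1 (4 * (a ^ 2 + 1) * Real.exp (-(a ^ 2 * snr / 8))) := by
  have hXae : ∀ᵐ ω ∂μ, X ω = -a ∨ X ω = 0 ∨ X ω = a :=
    ae_of_ae_map hX.aemeasurable (hXlaw ▸ ae_XaLaw a)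
  have hXmem : ∀ p, MemLp X p μ := fun p => by
    refine MemLp.of_bound hX.aestronglyMeasurable a ?_
    filter_upwards [hXae] with ω hω
    rcases hω with h | h | h <;> simp [h, abs_of_pos (zero_lt_one.trans_le ha)]
    linarith
  have hmean : ∀ g : ℝ → ℝ, Measurable g → ∫ ω, g (X ω) ∂μ
      = 1 / (2 * a ^ 2) * g (-a) + (1 - 1 / a ^ 2) * g 0 + 1 / (2 * a ^ 2) * g a := by
    intro g hg
    rw [← integral_XaLaw ha, ← hXlaw, integral_map hX.aemeasurable hg.aestronglyMeasurable]
  have ha0 : a ≠ 0 := by positivity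
  have hpower : ∫ ω, (X ω) ^ 2 ∂μ = 1 := by
    rw [hmean (fun x => x ^ 2) (by fun_prop)]
    field_simp
    ring
  refine ⟨hpower, fun snr hsnr => ?_⟩
  have hY : Measurable (obsS X Z snr) := (hX.const_mul _).add hZ
  have hm : obsSigmaS X Z snr ≤ _ := hY.comap_le
  refine le_min ?_ ?_
  · have h := integral_sub_condExp_sq_le hm (hXmem 2) (MemLp.zero (ε := ℝ)) stronglyMeasurable_zero
    simpa [mmseS, hpower] using h
  set t : ℝ := √snr * a / 2 with ht_def
  have ht : 0 ≤ t := by positivity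
  have ht_sq : t ^ 2 / 2 = a ^ 2 * snr / 8 := by
    rw [ht_def, div_pow, mul_pow, Real.sq_sqrt hsnr.le]
    ring
  have hsub : HasSubgaussianMGF Z 1 μ := hasSubgaussianMGF_of_map_eq_gaussianReal hZ hZlaw
  have htail_pos : μ.real (Z ⁻¹' Set.Ici t) ≤ Real.exp (-(a ^ 2 * snr / 8)) := by
    rw [← ht_sq]
    simpa [neg_div, Set.preimage] using hsub.measure_ge_le ht
  have htail_neg : μ.real (Z ⁻¹' Set.Iic (-t)) ≤ Real.exp (-(a ^ 2 * snr / 8)) := by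
    rw [← ht_sq]
    simpa [neg_div, le_neg, Set.preimage] using hsub.neg.measure_ge_le ht
  have hFY : StronglyMeasurable[obsSigmaS X Z snr]
      (fun ω => thresholdDecision a t (obsS X Z snr ω)) :=
    ((measurable_thresholdDecision a t).comp (comap_measurable _)).stronglyMeasurable
  have hFmem : MemLp (fun ω => thresholdDecision a t (obsS X Z snr ω)) 2 μ :=
    MemLp.of_bound (hFY.mono hm).aestronglyMeasurable |a|
      (.of_forall fun ω => abs_thresholdDecision_le a t _)
  have hI : ∀ (g : ℝ → ℝ) (s : Set ℝ), MeasurableSet s →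
      Integrable (fun ω => g (X ω)) μ →
      Integrable (fun ω => g (X ω) * s.indicator 1 (Z ω)) μ := by
    intro g s hs hgX
    have h : (fun ω => g (X ω) * s.indicator 1 (Z ω))
        = (Z ⁻¹' s).indicator (fun ω => g (X ω)) := by
      ext ω
      by_cases hω : Z ω ∈ s <;> simp [hω]
    rw [h]
    exact hgX.indicator (hZ hs)
  have hsq_sub : Integrable (fun ω => (a - X ω) ^ 2) μ :=
    ((memLp_const a).sub (hXmem 2)).integrable_sq
  have hsq_add : Integrable (fun ω => (a + X ω) ^ 2) μ :=
    ((memLp_const a).add (hXmem 2)).integrable_sq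
  have hA := hI (fun x => (a - x) ^ 2) _ (measurableSet_Ici (a := t)) hsq_sub
  have hB := hI (fun x => (a + x) ^ 2) _ (measurableSet_Iic (a := -t)) hsq_add
  calc mmseS μ X Z snr
      ≤ ∫ ω, (X ω - thresholdDecision a t (obsS X Z snr ω)) ^ 2 ∂μ :=
        integral_sub_condExp_sq_le hm (hXmem 2) hFmem hFY
    _ ≤ ∫ ω, ((a - X ω) ^ 2 * (Set.Ici t).indicator 1 (Z ω)
          + (a + X ω) ^ 2 * (Set.Iic (-t)).indicator 1 (Z ω)) ∂μ := by
        refine integral_mono_ae ((hXmem 2).sub hFmem).integrable_sq (hA.add hB) ?_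
        filter_upwards [hXae] with ω hω
        exact sub_thresholdDecision_sq_le ht (by rw [ht_def]; ring) hω
    _ = (a ^ 2 + 1) * μ.real (Z ⁻¹' Set.Ici t) + (a ^ 2 + 1) * μ.real (Z ⁻¹' Set.Iic (-t)) := by
        rw [integral_add hA hB,
          integral_mul_indicator_of_indepFun (g := fun x => (a - x) ^ 2) hX hZ hindep
            (by fun_prop) measurableSet_Ici,
          integral_mul_indicator_of_indepFun (g := fun x => (a + x) ^ 2) hX hZ hindep
            (by fun_prop) measurableSet_Iic,
          hmean (fun x => (a - x) ^ 2) (by fun_prop), hmean (fun x => (a + x) ^ 2) (by fun_prop)]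
        congr 2 <;> field_simp <;> ring
    _ ≤ (a ^ 2 + 1) * Real.exp (-(a ^ 2 * snr / 8))
          + (a ^ 2 + 1) * Real.exp (-(a ^ 2 * snr / 8)) := by gcongr
    _ ≤ 4 * (a ^ 2 + 1) * Real.exp (-(a ^ 2 * snr / 8)) := by
        have : 0 ≤ (a ^ 2 + 1) * Real.exp (-(a ^ 2 * snr / 8)) := by positivity
        linarith

end
end
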